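/- Let the compact set A and lower semicontinuous kernel K satisfy assumptions (A1)-(A4). For each N ≥ 2 choose a configuration ω_N ∈ A^N and let ν_N be the probability measure assigning mass 1/N to each point of ω_N (counting multiplicities). Then the following are equivalent: (a) the measures ν_N converge weakly to μ_eq as N → ∞; (b) lim_{N→∞} P(ω_N) = W_K; (c) the functions x ↦ (1/N)·Σ_{y∈ω_N} K(x,y) − P(ω_N) converge to 0 in L¹(μ_eq) as N → ∞. -/

import Mathlib

open MeasureTheory Filter Topology BoundedContinuousFunction NNReal ENNReal

noncomputable section

/-- The potential of a measure `μ` with respect to the kernel `K x y = f (nndist x y)`. -/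
def potential {t : ℕ} (f : ℝ≥0 → ℝ≥0∞) (μ : Measure (EuclideanSpace ℝ (Fin t)))
    (x : EuclideanSpace ℝ (Fin t)) : ℝ≥0∞ :=
  ∫⁻ y, f (nndist x y) ∂μ

/-- The energy `I[μ] = ∫∫ K(x,y) dμ(x) dμ(y)`. -/
def energy {t : ℕ} (f : ℝ≥0 → ℝ≥0∞) (μ : Measure (EuclideanSpace ℝ (Fin t))) : ℝ≥0∞ :=
  ∫⁻ x, potential f μ x ∂μ

/-- The normalized discrete potential `(1/N) ∑_{y ∈ ω} K(x,y)` of a configuration. -/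
def discretePotential {t : ℕ} (f : ℝ≥0 → ℝ≥0∞) {N : ℕ}
    (ω : Fin N → EuclideanSpace ℝ (Fin t)) (x : EuclideanSpace ℝ (Fin t)) : ℝ≥0∞ :=
  (N : ℝ≥0∞)⁻¹ * ∑ i, f (nndist x (ω i))

/-- The polarization `P(ω) = min_{x ∈ A} (1/N) ∑_{y ∈ ω} K(x,y)` of a configuration. -/
def polarization {t : ℕ} (f : ℝ≥0 → ℝ≥0∞) (A : Set (EuclideanSpace ℝ (Fin t))) {N : ℕ}
    (ω : Fin N → EuclideanSpace ℝ (Fin t)) : ℝ≥0∞ :=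
  ⨅ x ∈ A, discretePotential f ω x

/-- The optimal `N`-point polarization `𝒫(A,N)`. -/
def maxPolarization {t : ℕ} (f : ℝ≥0 → ℝ≥0∞) (A : Set (EuclideanSpace ℝ (Fin t)))
    (N : ℕ) : ℝ≥0∞ :=
  ⨆ (ω : Fin N → EuclideanSpace ℝ (Fin t)) (_ : ∀ i, ω i ∈ A), polarization f A ω

/-- The normalized counting measure of a configuration. -/
def countingMeasure {t : ℕ} {N : ℕ} (ω : Fin N → EuclideanSpace ℝ (Fin t)) :
    Measure (EuclideanSpace ℝ (Fin t)) :=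
  (N : ℝ≥0∞)⁻¹ • ∑ i, Measure.dirac (ω i)

/-- Weak convergence of a sequence of measures: integrals of every bounded continuous
function converge. -/
def WeaklyTendsto {t : ℕ} (ν : ℕ → Measure (EuclideanSpace ℝ (Fin t)))
    (μ : Measure (EuclideanSpace ℝ (Fin t))) : Prop :=
  ∀ g : EuclideanSpace ℝ (Fin t) →ᵇ ℝ,
    Tendsto (fun N => ∫ x, g x ∂(ν N)) atTop (𝓝 (∫ x, g x ∂μ))


/- Symmetry of `K` gives `∫ U^ν dμ_eq = ∫ U^{μ_eq} dν = W_K` for every probability measure `ν` on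
`A`. Hence `P(ν) ≤ W_K` and `∫ (U^ν - P(ν)) dμ_eq = W_K - P(ν)`, which is (b) ↔ (c). Since `K` is
lower semicontinuous, so is `(x, ν) ↦ U^ν(x)`, and compactness of `A` makes `P` lower
semicontinuous, which is (a) → (b). For (c) → (a), a cluster point `σ` of `ν_N` satisfies
`∫_s U^σ dμ_eq ≤ W_K μ_eq(s)` for all `s`, so `U^σ ≤ W_K` holds `μ_eq`-almost everywhere and, by
semicontinuity, on the support `A` of `μ_eq`. Integrating against `σ` yields
`I[σ] ≤ W_K = I[μ_eq]`, and `σ = μ_eq` by uniqueness of the equilibrium measure. -/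

section Semicontinuity

theorem lowerSemicontinuous_biInf_of_isCompact {X Z β : Type*} [TopologicalSpace X]
    [TopologicalSpace Z] [CompleteLinearOrder β] [DenselyOrdered β] {g : X → Z → β}
    (hg : LowerSemicontinuous (Function.uncurry g)) {s : Set X} (hs : IsCompact s) :
    LowerSemicontinuous fun z => ⨅ x ∈ s, g x z := by
  intro z c hc
  obtain ⟨d, hcd, hd⟩ := exists_between hc
  have hnear : ∀ᶠ z' in 𝓝 z, ∀ x ∈ s, d < g x z' :=
    hs.eventually_forall_of_forall_eventually fun x hx =>
      (continuous_swap.tendsto (z, x)).eventually (hg (x, z) d (hd.trans_le (iInf₂_le x hx)))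
  exact hnear.mono fun z' hz' => hcd.trans_le (le_iInf₂ fun x hx => (hz' x hx).le)

theorem le_of_mapClusterPt_of_lowerSemicontinuousAt {ι Z β : Type*} [TopologicalSpace Z]
    [LinearOrder β] [DenselyOrdered β] [TopologicalSpace β] [OrderClosedTopology β]
    {l : Filter ι} {g : Z → β} {u : ι → Z} {z : Z} {v : ι → β} {c : β}
    (hg : LowerSemicontinuousAt g z) (hz : MapClusterPt z l u) (hv : Tendsto v l (𝓝 c))
    (hle : ∀ᶠ i in l, g (u i) ≤ v i) : g z ≤ c := by
  refine le_of_forall_lt_imp_le_of_dense fun d hd => ?_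
  have hfreq : ∃ᶠ i in l, d < g (u i) := hz.frequently (hg d hd)
  exact ge_of_tendsto_of_frequently hv
    ((hfreq.and_eventually hle).mono fun i hi => (hi.1.trans_le hi.2).le)

theorem le_of_ae_le_of_mem_support {X β : Type*} [TopologicalSpace X] [MeasurableSpace X]
    [LinearOrder β] {μ : Measure X} {g : X → β} (hg : LowerSemicontinuous g) {c : β}
    (hle : ∀ᵐ x ∂μ, g x ≤ c) {x : X} (hx : x ∈ μ.support) : g x ≤ c :=
  Measure.support_subset_of_isClosed (hg.isClosed_preimage c) hle hx

theorem lowerSemicontinuous_lintegral {Z Y : Type*} [TopologicalSpace Z]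
    [FirstCountableTopology Z] [MeasurableSpace Y] {μ : Measure Y} {g : Z → Y → ℝ≥0∞}
    (hmeas : ∀ z, Measurable (g z)) (hg : ∀ y, LowerSemicontinuous (g · y)) :
    LowerSemicontinuous fun z => ∫⁻ y, g z y ∂μ :=
  lowerSemicontinuous_iff_le_liminf.2 fun z =>
    (lintegral_mono fun y => (hg y).le_liminf z).trans (lintegral_liminf_le hmeas)

theorem lowerSemicontinuous_uncurry_comp_nndist {X β : Type*} [PseudoMetricSpace X]
    [Preorder β] {f : ℝ≥0 → β} (hf : LowerSemicontinuous f) :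
    LowerSemicontinuous (Function.uncurry fun x y : X => f (nndist x y)) :=
  hf.comp continuous_nndist

end Semicontinuity

section WeakTopology

theorem volume_restrict_Ioi_setOf_ofReal_lt (a : ℝ≥0∞) :
    volume.restrict (Set.Ioi 0) {s : ℝ | ENNReal.ofReal s < a} = a := by
  rw [Measure.restrict_apply (measurableSet_lt (by fun_prop) (by fun_prop))]
  cases a with
  | top => simp
  | coe r =>
    have hIoo : {s : ℝ | ENNReal.ofReal s < r} ∩ Set.Ioi 0 = Set.Ioo 0 (r : ℝ) := by
      ext s
      rw [Set.inter_comm]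
      refine and_congr_right fun (hs : 0 < s) => ?_
      simpa using ENNReal.ofReal_lt_ofReal_iff_of_nonneg (q := r) hs.le
    simp [hIoo]

theorem lintegral_eq_lintegral_measure_ofReal_lt {Ω : Type*} [MeasurableSpace Ω] (μ : Measure Ω)
    [SFinite μ] {g : Ω → ℝ≥0∞} (hg : Measurable g) :
    ∫⁻ x, g x ∂μ = ∫⁻ s in Set.Ioi (0 : ℝ), μ {x | ENNReal.ofReal s < g x} := by
  have hm : MeasurableSet {p : Ω × ℝ | ENNReal.ofReal p.2 < g p.1} :=
    measurableSet_lt (by fun_prop) (by fun_prop)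
  calc ∫⁻ x, g x ∂μ
      = ∫⁻ x, volume.restrict (Set.Ioi 0) {s : ℝ | ENNReal.ofReal s < g x} ∂μ := by
        simp only [volume_restrict_Ioi_setOf_ofReal_lt]
    _ = μ.prod (volume.restrict (Set.Ioi 0)) {p : Ω × ℝ | ENNReal.ofReal p.2 < g p.1} :=
        (Measure.prod_apply hm).symm
    _ = ∫⁻ s in Set.Ioi (0 : ℝ), μ {x | ENNReal.ofReal s < g x} := Measure.prod_apply_symm hm

theorem lowerSemicontinuous_measure_of_isOpen {Ω : Type*} [TopologicalSpace Ω]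
    [MeasurableSpace Ω] [OpensMeasurableSpace Ω] [HasOuterApproxClosed Ω] {G : Set Ω}
    (hG : IsOpen G) : LowerSemicontinuous fun μ : ProbabilityMeasure Ω => (μ : Measure Ω) G :=
  lowerSemicontinuous_iff_le_liminf.2 fun _ =>
    ProbabilityMeasure.le_liminf_measure_open_of_tendsto tendsto_id hG

theorem lowerSemicontinuous_lintegral_probabilityMeasure {Ω : Type*} [TopologicalSpace Ω]
    [MeasurableSpace Ω] [OpensMeasurableSpace Ω] [HasOuterApproxClosed Ω]
    [FirstCountableTopology (ProbabilityMeasure Ω)] {g : Ω → ℝ≥0∞} (hg : LowerSemicontinuous g) :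
    LowerSemicontinuous fun μ : ProbabilityMeasure Ω => ∫⁻ x, g x ∂(μ : Measure Ω) := by
  simp_rw [lintegral_eq_lintegral_measure_ofReal_lt _ hg.measurable]
  refine lowerSemicontinuous_lintegral (fun μ => ?_) fun s =>
    lowerSemicontinuous_measure_of_isOpen (hg.isOpen_preimage (ENNReal.ofReal s))
  exact Antitone.measurable fun s u hsu => measure_mono fun x hx =>
    (ENNReal.ofReal_le_ofReal hsu).trans_lt hx

theorem isCompact_setOf_ae_mem {X : Type*} [TopologicalSpace X] [T2Space X] [MeasurableSpace X]
    [BorelSpace X] {A : Set X} (hA : IsCompact A) :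
    IsCompact {μ : ProbabilityMeasure X | ∀ᵐ x ∂(μ : Measure X), x ∈ A} := by
  convert isCompact_setOfPred_probabilityMeasure_mass_eq_compl_isCompact_le (u := fun _ => 0)
    tendsto_const_nhds (fun _ : ℕ => hA) (.inr monotone_const) using 3 with μ
  simp [ae_iff, ProbabilityMeasure.null_iff_toMeasure_null, Set.compl_def]

end WeakTopology

section Kernel

/-- The potential `x ↦ ∫ K(x,y) dμ(y)` of a measure for an arbitrary kernel. -/
def kernelPotential {X Y : Type*} [MeasurableSpace Y] (K : X → Y → ℝ≥0∞) (μ : Measure Y)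
    (x : X) : ℝ≥0∞ :=
  ∫⁻ y, K x y ∂μ

/-- The energy of a measure for an arbitrary kernel. -/
def kernelEnergy {X : Type*} [MeasurableSpace X] (K : X → X → ℝ≥0∞) (μ : Measure X) : ℝ≥0∞ :=
  ∫⁻ x, kernelPotential K μ x ∂μ

/-- The polarization of a measure: the least value on `A` of its potential. For the normalized
counting measure of a configuration this is the polarization of the configuration. -/
def kernelPolarization {X Y : Type*} [MeasurableSpace Y] (K : X → Y → ℝ≥0∞) (A : Set X)
    (μ : Measure Y) : ℝ≥0∞ :=
  ⨅ x ∈ A, kernelPotential K μ x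

section LowerSemicontinuousKernel

variable {X Y : Type*} [TopologicalSpace X] [TopologicalSpace.PseudoMetrizableSpace X]
  [SecondCountableTopology X] [MeasurableSpace X] [OpensMeasurableSpace X]
  [TopologicalSpace Y] [TopologicalSpace.PseudoMetrizableSpace Y] [SecondCountableTopology Y]
  [MeasurableSpace Y] [OpensMeasurableSpace Y] {K : X → Y → ℝ≥0∞}

theorem lowerSemicontinuous_kernelPotential (hK : LowerSemicontinuous (Function.uncurry K)) :
    LowerSemicontinuous
      (Function.uncurry fun (x : X) (ν : ProbabilityMeasure Y) => kernelPotential K ν x) := by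
  have hprod (x : X) (ν : ProbabilityMeasure Y) : kernelPotential K ν x =
      ∫⁻ p, Function.uncurry K p ∂((diracProba x).prod ν : ProbabilityMeasure (X × Y)) := by
    rw [ProbabilityMeasure.toMeasure_prod, lintegral_prod _ hK.measurable.aemeasurable]
    exact (lintegral_dirac' x hK.measurable.lintegral_prod_right').symm
  simp only [hprod]
  exact (lowerSemicontinuous_lintegral_probabilityMeasure hK).comp
    (ProbabilityMeasure.continuous_prod.comp (continuous_diracProba.prodMap continuous_id))

theorem ae_kernelPotential_le_of_mapClusterPt (hK : LowerSemicontinuous (Function.uncurry K))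
    {ι : Type*} {l : Filter ι} {μ : Measure X} [SigmaFinite μ] {ν : ι → ProbabilityMeasure Y}
    {σ : ProbabilityMeasure Y} (hσ : MapClusterPt σ l ν) {u : ι → ℝ≥0∞} {W : ℝ≥0∞}
    (hu : ∀ i, u i ≤ W)
    (hlim : Tendsto (fun i => ∫⁻ x, (kernelPotential K (ν i) x - u i) ∂μ) l (𝓝 0)) :
    ∀ᵐ x ∂μ, kernelPotential K σ x ≤ W := by
  have hmeas (ν : ProbabilityMeasure Y) : Measurable (kernelPotential K ν) :=
    hK.measurable.lintegral_prod_right'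
  refine ae_le_of_forall_setLIntegral_le_of_sigmaFinite (hmeas σ) fun s _ _ => ?_
  have hlsc : LowerSemicontinuous fun ν : ProbabilityMeasure Y =>
      ∫⁻ x in s, kernelPotential K ν x ∂μ :=
    lowerSemicontinuous_lintegral hmeas fun x =>
      (lowerSemicontinuous_kernelPotential hK).comp (Continuous.prodMk_right x)
  have hbound (i : ι) : ∫⁻ x in s, kernelPotential K (ν i) x ∂μ ≤
      ∫⁻ x, (kernelPotential K (ν i) x - u i) ∂μ + ∫⁻ _ in s, W ∂μ :=
    calc ∫⁻ x in s, kernelPotential K (ν i) x ∂μ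
        ≤ ∫⁻ x in s, (kernelPotential K (ν i) x - u i + W) ∂μ :=
          lintegral_mono fun x => le_tsub_add.trans (by gcongr; exact hu i)
      _ = ∫⁻ x in s, (kernelPotential K (ν i) x - u i) ∂μ + ∫⁻ _ in s, W ∂μ :=
          lintegral_add_right _ measurable_const
      _ ≤ _ := by gcongr; exact Measure.restrict_le_self
  have hlim' := hlim.add_const (∫⁻ _ in s, W ∂μ)
  rw [zero_add] at hlim'
  exact (le_of_mapClusterPt_of_lowerSemicontinuousAt (hlsc σ) hσ hlim' (.of_forall hbound) :)

end LowerSemicontinuousKernel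

section Polarization

variable {X Y : Type*} [MeasurableSpace X] [MeasurableSpace Y] {K : X → Y → ℝ≥0∞} {A : Set X}
  {μ : Measure X} {ν : Measure Y}

theorem lintegral_kernelPotential_flip [SFinite μ] [SFinite ν]
    (hK : Measurable (Function.uncurry K)) :
    ∫⁻ x, kernelPotential K ν x ∂μ = ∫⁻ y, kernelPotential (flip K) μ y ∂ν :=
  lintegral_lintegral_swap hK.aemeasurable

theorem lintegral_kernelPotential_of_eqOn [IsProbabilityMeasure μ] {W : ℝ≥0∞}
    (hW : ∀ x ∈ A, kernelPotential K ν x = W) (hμ : ∀ᵐ x ∂μ, x ∈ A) :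
    ∫⁻ x, kernelPotential K ν x ∂μ = W := by
  rw [lintegral_congr_ae (hμ.mono hW), lintegral_const, measure_univ, mul_one]

theorem ae_kernelPolarization_le_kernelPotential (hμ : ∀ᵐ x ∂μ, x ∈ A) :
    ∀ᵐ x ∂μ, kernelPolarization K A ν ≤ kernelPotential K ν x :=
  hμ.mono fun x hx => iInf₂_le x hx

theorem kernelPolarization_le_lintegral [IsProbabilityMeasure μ] (hμ : ∀ᵐ x ∂μ, x ∈ A) :
    kernelPolarization K A ν ≤ ∫⁻ x, kernelPotential K ν x ∂μ := by
  simpa using lintegral_mono_ae (ae_kernelPolarization_le_kernelPotential (K := K) (ν := ν) hμ)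

theorem lintegral_kernelPotential_sub_kernelPolarization [IsProbabilityMeasure μ]
    (hμ : ∀ᵐ x ∂μ, x ∈ A) (hν : kernelPolarization K A ν ≠ ⊤) :
    ∫⁻ x, (kernelPotential K ν x - kernelPolarization K A ν) ∂μ =
      ∫⁻ x, kernelPotential K ν x ∂μ - kernelPolarization K A ν := by
  rw [lintegral_sub measurable_const (by simpa using hν)
    (ae_kernelPolarization_le_kernelPotential hμ), lintegral_const, measure_univ, mul_one]

end Polarization

theorem polarization_tfae_general {X : Type*} [TopologicalSpace X]
    [TopologicalSpace.MetrizableSpace X] [SecondCountableTopology X]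
    [MeasurableSpace X] [BorelSpace X] {K : X → X → ℝ≥0∞}
    (hK : LowerSemicontinuous (Function.uncurry K)) (hsymm : ∀ x y, K x y = K y x)
    {A : Set X} (hA : IsCompact A) {μ : ProbabilityMeasure X}
    (hμA : ∀ᵐ x ∂(μ : Measure X), x ∈ A)
    (henergy : kernelEnergy K μ ≠ ⊤)
    (hunique : ∀ σ : ProbabilityMeasure X, (∀ᵐ x ∂(σ : Measure X), x ∈ A) →
      kernelEnergy K σ ≤ kernelEnergy K μ → σ = μ)
    (hsupp : A ⊆ (μ : Measure X).support) {W : ℝ≥0∞}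
    (hpot : ∀ x ∈ A, kernelPotential K μ x = W) {ι : Type*} {l : Filter ι}
    {ν : ι → ProbabilityMeasure X} (hν : ∀ i, ∀ᵐ x ∂(ν i : Measure X), x ∈ A) :
    List.TFAE [
      Tendsto ν l (𝓝 μ),
      Tendsto (fun i => kernelPolarization K A (ν i)) l (𝓝 W),
      Tendsto (fun i => ∫⁻ x, (kernelPotential K (ν i) x - kernelPolarization K A (ν i)) ∂μ)
        l (𝓝 0)] := by
  have hW : kernelEnergy K μ = W := lintegral_kernelPotential_of_eqOn hpot hμA
  have hWtop : W ≠ ⊤ := hW ▸ henergy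
  have hflip : flip K = K := funext₂ fun x y => hsymm y x
  have hint (i : ι) : ∫⁻ x, kernelPotential K (ν i) x ∂μ = W := by
    rw [lintegral_kernelPotential_flip hK.measurable, hflip]
    exact lintegral_kernelPotential_of_eqOn hpot (hν i)
  have hle (i : ι) : kernelPolarization K A (ν i) ≤ W :=
    hint i ▸ kernelPolarization_le_lintegral hμA
  have hlsc := lowerSemicontinuous_kernelPotential hK
  tfae_have 1 → 2 := fun h => by
    have hWle : W ≤ kernelPolarization K A μ := le_iInf₂ fun x hx => (hpot x hx).ge
    refine tendsto_order.2 ⟨fun c hc => ?_, fun c hc => .of_forall fun i => (hle i).trans_lt hc⟩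
    exact h.eventually (lowerSemicontinuous_biInf_of_isCompact hlsc hA μ c (hc.trans_le hWle))
  tfae_have 2 ↔ 3 := by
    simp only [lintegral_kernelPotential_sub_kernelPolarization hμA
      (ne_top_of_le_ne_top hWtop (hle _)), hint]
    exact (ENNReal.tendsto_const_sub_nhds_zero_iff hWtop hle).symm
  tfae_have 3 → 1 := fun h => by
    refine (isCompact_setOf_ae_mem hA).tendsto_nhds_of_unique_mapClusterPt (.of_forall hν)
      fun σ hσA hσ => hunique σ hσA ?_
    have hσW : ∀ x ∈ A, kernelPotential K σ x ≤ W := fun x hx =>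
      le_of_ae_le_of_mem_support (hlsc.comp (Continuous.prodMk_left σ))
        (ae_kernelPotential_le_of_mapClusterPt hK hσ hle h) (hsupp hx)
    calc kernelEnergy K σ ≤ ∫⁻ _, W ∂(σ : Measure X) := lintegral_mono_ae (Eventually.mono hσA hσW)
      _ = kernelEnergy K μ := by simp [hW]
  tfae_finish

end Kernel

section Configuration

variable {t N : ℕ}

theorem kernelPotential_countingMeasure (f : ℝ≥0 → ℝ≥0∞)
    (ω : Fin N → EuclideanSpace ℝ (Fin t)) :
    kernelPotential (fun x y => f (nndist x y)) (countingMeasure ω) = discretePotential f ω := by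
  ext x
  simp [kernelPotential, countingMeasure, discretePotential]

theorem kernelPolarization_countingMeasure (f : ℝ≥0 → ℝ≥0∞)
    (A : Set (EuclideanSpace ℝ (Fin t))) (ω : Fin N → EuclideanSpace ℝ (Fin t)) :
    kernelPolarization (fun x y => f (nndist x y)) A (countingMeasure ω) = polarization f A ω := by
  simp only [kernelPolarization, kernelPotential_countingMeasure, polarization]

theorem ae_countingMeasure_mem {A : Set (EuclideanSpace ℝ (Fin t))} (hA : MeasurableSet A)
    {ω : Fin N → EuclideanSpace ℝ (Fin t)} (hω : ∀ i, ω i ∈ A) :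
    ∀ᵐ x ∂countingMeasure ω, x ∈ A := by
  rw [ae_iff]
  change countingMeasure ω Aᶜ = 0
  simp [countingMeasure, hA.compl, hω]

/-- The normalized counting measure of a nonempty configuration as a point of the space of
probability measures. -/
def countingProbabilityMeasure [NeZero N] (ω : Fin N → EuclideanSpace ℝ (Fin t)) :
    ProbabilityMeasure (EuclideanSpace ℝ (Fin t)) :=
  ⟨countingMeasure ω, ⟨by
    simp [countingMeasure, ENNReal.inv_mul_cancel (NeZero.ne (N : ℝ≥0∞))]⟩⟩

@[simp]
theorem coe_countingProbabilityMeasure [NeZero N] (ω : Fin N → EuclideanSpace ℝ (Fin t)) :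
    (countingProbabilityMeasure ω : Measure (EuclideanSpace ℝ (Fin t))) = countingMeasure ω :=
  rfl

theorem weaklyTendsto_countingMeasure_iff (ω : (N : ℕ) → Fin N → EuclideanSpace ℝ (Fin t))
    (μ : ProbabilityMeasure (EuclideanSpace ℝ (Fin t))) :
    WeaklyTendsto (fun N => countingMeasure (ω N)) μ ↔
      Tendsto (fun n => countingProbabilityMeasure (ω (n + 1))) atTop (𝓝 μ) := by
  rw [ProbabilityMeasure.tendsto_iff_forall_integral_tendsto]
  exact forall_congr' fun g =>
    (tendsto_add_atTop_iff_nat (f := fun N => ∫ x, g x ∂(countingMeasure (ω N))) 1).symm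

end Configuration

theorem polarization_tfae
    {t : ℕ} (A : Set (EuclideanSpace ℝ (Fin t))) (hA : IsCompact A)
    (f : ℝ≥0 → ℝ≥0∞) (hf : LowerSemicontinuous f)
    (μeq : Measure (EuclideanSpace ℝ (Fin t))) (hμeq : IsProbabilityMeasure μeq)
    (hμeqA : μeq Aᶜ = 0)
    (hA1 : ∃ μ : Measure (EuclideanSpace ℝ (Fin t)),
      IsProbabilityMeasure μ ∧ μ Aᶜ = 0 ∧ energy f μ < ⊤)
    (hA2min : ∀ ν : Measure (EuclideanSpace ℝ (Fin t)),
      IsProbabilityMeasure ν → ν Aᶜ = 0 → energy f μeq ≤ energy f ν)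
    (hA2uniq : ∀ ν : Measure (EuclideanSpace ℝ (Fin t)),
      IsProbabilityMeasure ν → ν Aᶜ = 0 → energy f ν = energy f μeq → ν = μeq)
    (hA3 : ∀ x ∈ A, ∀ U : Set (EuclideanSpace ℝ (Fin t)), IsOpen U → x ∈ U → 0 < μeq U)
    (W : ℝ≥0∞) (hW : 0 < W) (hA4 : ∀ x ∈ A, potential f μeq x = W)
    (ω : (N : ℕ) → Fin N → EuclideanSpace ℝ (Fin t)) (hω : ∀ N, ∀ i, ω N i ∈ A) :
    List.TFAE [
      WeaklyTendsto (fun N => countingMeasure (ω N)) μeq,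
      Tendsto (fun N => polarization f A (ω N)) atTop (𝓝 W),
      Tendsto (fun N => ∫⁻ x, (discretePotential f (ω N) x - polarization f A (ω N)) ∂μeq)
        atTop (𝓝 0)] := by
  let μ : ProbabilityMeasure (EuclideanSpace ℝ (Fin t)) := ⟨μeq, hμeq⟩
  obtain ⟨τ, hτ, hτA, hτfin⟩ := hA1
  have h := polarization_tfae_general (lowerSemicontinuous_uncurry_comp_nndist hf)
    (fun x y => congrArg f (nndist_comm x y)) hA (μ := μ) hμeqA
    ((hA2min τ hτ hτA).trans_lt hτfin).ne
    (fun σ hσA hσ => Subtype.ext <|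
      hA2uniq σ inferInstance hσA (hσ.antisymm (hA2min σ inferInstance hσA)))
    (fun x hx => Measure.support_eq_forall_isOpen.ge fun U hxU hU => hA3 x hx U hU hxU) hA4
    (l := atTop) (ν := fun n => countingProbabilityMeasure (ω (n + 1)))
    fun n => ae_countingMeasure_mem hA.measurableSet (hω _)
  simp only [coe_countingProbabilityMeasure, kernelPotential_countingMeasure,
    kernelPolarization_countingMeasure, ← weaklyTendsto_countingMeasure_iff] at h
  rwa [tendsto_add_atTop_iff_nat (f := fun N => polarization f A (ω N)) 1,
    tendsto_add_atTop_iff_nat (f := fun N => ∫⁻ x,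
      (discretePotential f (ω N) x - polarization f A (ω N)) ∂μ) 1] at h
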